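/- Fix n ≥ 1 and let m be any index that maximizes the number of quasi-Stirling permutations of size n with exactly m descents (i.e., |{w ∈ Q̄_n : des(w) = m}| ≥ |{w ∈ Q̄_n : des(w) = j}| for all j). Then |m − (3n+1)/4| < 1. -/

import Mathlib

open Finset
open scoped Classical

/-- Number of descents of a word `w` of length `N` over a linearly ordered
alphabet.  Positions are 0-indexed: a position `i` is a descent if it is the
last position or the letter at `i` is greater than the letter at `i + 1`. -/
noncomputable def desW {α : Type*} [LinearOrder α] {N : ℕ} (w : Fin N → α) : ℕ :=
  (univ.filter fun i : Fin N =>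
    (i : ℕ) + 1 = N ∨ ∃ h : (i : ℕ) + 1 < N, w ⟨(i : ℕ) + 1, h⟩ < w i).card

/-- The set of quasi-Stirling permutations of size `n`, encoded as words
`w : Fin (2 * n) → Fin n` (the letters `1, …, n` are encoded as the elements
of `Fin n`) in which every letter occurs exactly twice and there are no indices
`i < j < l < p` with `w i = w l`, `w j = w p` and `w i ≠ w j`. -/
noncomputable def quasiStirlingSet (n : ℕ) : Finset (Fin (2 * n) → Fin n) :=
  univ.filter fun w =>
    (∀ a : Fin n, (univ.filter fun i => w i = a).card = 2) ∧
    ∀ i j l p : Fin (2 * n), i < j → j < l → l < p →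
      w i = w l → w j = w p → w i = w j

open Polynomial


/-- generating polynomial of a sum of independent Bernoulli variables. -/
noncomputable def pbPoly {ι : Type*} (p : ι → ℝ) (s : Finset ι) : ℝ[X] :=
  ∏ i ∈ s, (C (p i) * X + C (1 - p i))

lemma pb_erase {ι : Type*} (p : ι → ℝ) (s : Finset ι) (i : ι) (hi : i ∈ s) :
    pbPoly p s = (C (p i) * X + C (1 - p i)) * pbPoly p (s.erase i) := by
  unfold pbPoly
  rw [Finset.mul_prod_erase s (fun i => C (p i) * X + C (1 - p i)) hi]

lemma pb_coeff_succ {ι : Type*} (p : ι → ℝ) (s : Finset ι) (i : ι) (hi : i ∈ s) (k : ℕ) :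
    (pbPoly p s).coeff (k+1) = p i * (pbPoly p (s.erase i)).coeff k
      + (1 - p i) * (pbPoly p (s.erase i)).coeff (k+1) := by
  rw [pb_erase p s i hi, add_mul, mul_assoc, coeff_add, coeff_C_mul, coeff_X_mul, coeff_C_mul]

lemma pb_coeff_zero {ι : Type*} (p : ι → ℝ) (s : Finset ι) (i : ι) (hi : i ∈ s) :
    (pbPoly p s).coeff 0 = (1 - p i) * (pbPoly p (s.erase i)).coeff 0 := by
  rw [pb_erase p s i hi, add_mul, mul_assoc, coeff_add, coeff_C_mul, coeff_C_mul]
  simp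

lemma pb_nonneg {ι : Type*} (p : ι → ℝ) (hp0 : ∀ i, 0 ≤ p i) (hp1 : ∀ i, p i ≤ 1)
    (s : Finset ι) (k : ℕ) : 0 ≤ (pbPoly p s).coeff k := by
  induction s using Finset.induction_on generalizing k with
  | empty => simp [pbPoly, coeff_one]; split_ifs <;> norm_num
  | insert a s ha ih =>
    have h1 := hp0 a
    have h2 : 0 ≤ 1 - p a := by linarith [hp1 a]
    cases k with
    | zero =>
      rw [pb_coeff_zero p _ a (mem_insert_self _ _), Finset.erase_insert ha]
      exact mul_nonneg h2 (ih 0)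
    | succ k =>
      rw [pb_coeff_succ p _ a (mem_insert_self _ _), Finset.erase_insert ha]
      exact add_nonneg (mul_nonneg h1 (ih _)) (mul_nonneg h2 (ih _))

lemma pb_deriv {ι : Type*} (p : ι → ℝ) (s : Finset ι) (k : ℕ) :
    ((k : ℝ) + 1) * (pbPoly p s).coeff (k+1) = ∑ i ∈ s, p i * (pbPoly p (s.erase i)).coeff k := by
  have h := congrArg (fun q => coeff q k) (derivative_prod_finset (s := s)
    (f := fun i => C (p i) * X + C (1 - p i)))
  simp only [coeff_derivative, finsetSum_coeff] at h
  rw [mul_comm]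
  unfold pbPoly
  rw [h]
  refine Finset.sum_congr rfl fun i _ => ?_
  have h1 : derivative (C (p i) * X + C (1 - p i)) = C (p i) := by
    rw [derivative_add, derivative_C_mul, derivative_X, derivative_C, mul_one, add_zero]
  rw [h1, coeff_mul_C, mul_comm]

lemma pb_deriv' {ι : Type*} (p : ι → ℝ) (s : Finset ι) (k : ℕ) :
    ((s.card : ℝ) - k) * (pbPoly p s).coeff k
      = ∑ i ∈ s, (1 - p i) * (pbPoly p (s.erase i)).coeff k := by
  cases k with
  | zero =>
    rw [Finset.sum_congr rfl (fun i hi => (pb_coeff_zero p s i hi).symm)]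
    simp
  | succ k =>
    have h1 := pb_deriv p s k
    have h2 : ∑ i ∈ s, (pbPoly p s).coeff (k+1) = ∑ i ∈ s, (p i * (pbPoly p (s.erase i)).coeff k
      + (1 - p i) * (pbPoly p (s.erase i)).coeff (k+1)) :=
      Finset.sum_congr rfl (fun i hi => pb_coeff_succ p s i hi k)
    rw [Finset.sum_add_distrib, ← h1, Finset.sum_const, nsmul_eq_mul] at h2
    push_cast
    linarith

lemma pb_low {ι : Type*} (p : ι → ℝ) (hp0 : ∀ i, 0 ≤ p i) (hp1 : ∀ i, p i ≤ 1) (d : ℕ) :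
    ∀ (s : Finset ι), s.card = d → ∀ (k : ℕ), (k : ℝ) + 1 ≤ ∑ i ∈ s, p i →
    (pbPoly p s).coeff k < (pbPoly p s).coeff (k+1) ∨
      ((pbPoly p s).coeff k = 0 ∧ (pbPoly p s).coeff (k+1) = 0) := by
  induction d with
  | zero =>
    intro s hs k hk
    rw [Finset.card_eq_zero] at hs
    subst hs
    simp at hk
    have : (0:ℝ) ≤ k := by positivity
    linarith
  | succ d ih =>
    intro s hs k hk
    -- difference
    let Δ : ι → ℝ := fun i => (pbPoly p (s.erase i)).coeff k -
      (if k = 0 then 0 else (pbPoly p (s.erase i)).coeff (k-1))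
    have hΔ : ∀ i ∈ s, 0 < Δ i ∨ (Δ i = 0 ∧ (pbPoly p (s.erase i)).coeff k = 0) := by
      intro i hi
      cases k with
      | zero =>
        simp only [Δ, if_true, sub_zero]
        rcases (pb_nonneg p hp0 hp1 (s.erase i) 0).lt_or_eq with h | h
        · exact Or.inl h
        · exact Or.inr ⟨h.symm, h.symm⟩
      | succ k =>
        have hc : (s.erase i).card = d := by rw [Finset.card_erase_of_mem hi, hs]; rfl
        have := ih (s.erase i) hc k (by
          have h3 := Finset.add_sum_erase s p hi
          have := hp1 i
          push_cast at hk
          linarith)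
        simp only [Δ, Nat.add_sub_cancel, Nat.succ_ne_zero, if_false]
        rcases this with h | ⟨h, h'⟩
        · left; linarith
        · right; rw [h, h']; simp
    have hrel : ∀ i ∈ s, p i * (pbPoly p (s.erase i)).coeff k =
        p i * (pbPoly p s).coeff k + p i ^ 2 * Δ i := by
      intro i hi
      cases k with
      | zero => simp only [Δ, if_true]; rw [pb_coeff_zero p s i hi]; ring
      | succ k =>
        simp only [Δ, Nat.add_sub_cancel, Nat.succ_ne_zero, if_false]
        rw [pb_coeff_succ p s i hi]; ring
    have hd := pb_deriv p s k
    have hd2 := hd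
    rw [Finset.sum_congr rfl hrel, Finset.sum_add_distrib, ← Finset.sum_mul] at hd
    have hk1 : (0:ℝ) < (k:ℝ) + 1 := by positivity
    have hf := pb_nonneg p hp0 hp1 s k
    have hf1 := pb_nonneg p hp0 hp1 s (k+1)
    have hnn : ∀ i ∈ s, 0 ≤ p i ^ 2 * Δ i := by
      intro i hi
      refine mul_nonneg (sq_nonneg _) ?_
      rcases hΔ i hi with h | h
      · exact h.le
      · exact h.1.ge
    rcases (Finset.sum_nonneg hnn).lt_or_eq with h | h
    · left
      have : ((k:ℝ)+1) * (pbPoly p s).coeff k < ((k:ℝ)+1) * (pbPoly p s).coeff (k+1) := by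
        nlinarith
      exact lt_of_mul_lt_mul_left this hk1.le
    · right
      have hz := (Finset.sum_eq_zero_iff_of_nonneg hnn).1 h.symm
      have hs0 : ∑ i ∈ s, p i * (pbPoly p (s.erase i)).coeff k = 0 := by
        refine Finset.sum_eq_zero fun i hi => ?_
        rcases mul_eq_zero.1 (hz i hi) with h0 | h0
        · rw [pow_eq_zero_iff two_ne_zero] at h0; rw [h0, zero_mul]
        · rcases hΔ i hi with h1 | h1
          · linarith
          · rw [h1.2, mul_zero]
      rw [hs0] at hd2
      rw [hd2, ← h, add_zero] at hd
      constructor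
      · rcases mul_eq_zero.1 hd.symm with h0 | h0
        · linarith
        · exact h0
      · rcases mul_eq_zero.1 hd2 with h0 | h0
        · linarith
        · exact h0

lemma pb_high {ι : Type*} (p : ι → ℝ) (hp0 : ∀ i, 0 ≤ p i) (hp1 : ∀ i, p i ≤ 1) (d : ℕ) :
    ∀ (s : Finset ι), s.card = d → ∀ (k : ℕ), ∑ i ∈ s, p i ≤ k →
    (pbPoly p s).coeff (k+1) < (pbPoly p s).coeff k ∨
      ((pbPoly p s).coeff k = 0 ∧ (pbPoly p s).coeff (k+1) = 0) := by
  induction d with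
  | zero =>
    intro s hs k hk
    rw [Finset.card_eq_zero] at hs
    subst hs
    cases k with
    | zero => simp [pbPoly, coeff_one]
    | succ k => simp [pbPoly, coeff_one]
  | succ d ih =>
    intro s hs k hk
    let Δ : ι → ℝ := fun i => (pbPoly p (s.erase i)).coeff k - (pbPoly p (s.erase i)).coeff (k+1)
    have hΔ : ∀ i ∈ s, 0 < Δ i ∨ (Δ i = 0 ∧ (pbPoly p (s.erase i)).coeff k = 0) := by
      intro i hi
      have hc : (s.erase i).card = d := by rw [Finset.card_erase_of_mem hi, hs]; rfl
      have := ih (s.erase i) hc k (by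
          have h3 := Finset.add_sum_erase s p hi
          have := hp0 i
          linarith)
      simp only [Δ]
      rcases this with h | ⟨h, h'⟩
      · left; linarith
      · right; rw [h, h']; simp
    have hrel : ∀ i ∈ s, (1 - p i) * (pbPoly p (s.erase i)).coeff k =
        (1 - p i) * (pbPoly p s).coeff (k+1) + (1 - p i) ^ 2 * Δ i := by
      intro i hi
      simp only [Δ]
      rw [pb_coeff_succ p s i hi]; ring
    have hd := pb_deriv' p s k
    have hd2 := hd
    rw [Finset.sum_congr rfl hrel, Finset.sum_add_distrib, ← Finset.sum_mul,
      Finset.sum_sub_distrib, Finset.sum_const, nsmul_eq_mul, mul_one] at hd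
    have hf := pb_nonneg p hp0 hp1 s k
    have hf1 := pb_nonneg p hp0 hp1 s (k+1)
    have hle : ∀ i ∈ s, (pbPoly p s).coeff (k+1) ≤ (pbPoly p (s.erase i)).coeff k := by
      intro i hi
      rw [pb_coeff_succ p s i hi]
      have : 0 ≤ Δ i := by
        rcases hΔ i hi with h | h
        · exact h.le
        · exact h.1.ge
      simp only [Δ] at this
      nlinarith [hp1 i]
    have hnn : ∀ i ∈ s, 0 ≤ (1 - p i) ^ 2 * Δ i := by
      intro i hi
      refine mul_nonneg (sq_nonneg _) ?_
      rcases hΔ i hi with h | h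
      · exact h.le
      · exact h.1.ge
    rcases lt_or_ge (k:ℝ) (s.card : ℝ) with hkd | hkd
    · rcases (Finset.sum_nonneg hnn).lt_or_eq with h | h
      · left
        have : ((s.card:ℝ) - k) * (pbPoly p s).coeff (k+1) < ((s.card:ℝ) - k) * (pbPoly p s).coeff k := by
          nlinarith
        exact lt_of_mul_lt_mul_left this (by linarith)
      · right
        have hz := (Finset.sum_eq_zero_iff_of_nonneg hnn).1 h.symm
        have hs0 : ∑ i ∈ s, (1 - p i) * (pbPoly p (s.erase i)).coeff k = 0 := by
          refine Finset.sum_eq_zero fun i hi => ?_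
          rcases mul_eq_zero.1 (hz i hi) with h0 | h0
          · rw [pow_eq_zero_iff two_ne_zero] at h0; rw [h0, zero_mul]
          · rcases hΔ i hi with h1 | h1
            · linarith
            · rw [h1.2, mul_zero]
        rw [hs0] at hd2
        rw [hd2, ← h, add_zero] at hd
        constructor
        · rcases mul_eq_zero.1 hd2 with h0 | h0
          · linarith
          · exact h0
        · rcases mul_eq_zero.1 hd.symm with h0 | h0
          · linarith
          · exact h0
    · -- k ≥ card : coefficient k+1 vanishes
      have hk' : s.card ≤ k := by exact_mod_cast hkd
      have hdeg : (pbPoly p s).natDegree ≤ s.card := by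
        unfold pbPoly
        refine (natDegree_prod_le _ _).trans ?_
        refine (Finset.sum_le_card_nsmul s _ 1 fun i _ => ?_).trans (by simp)
        exact natDegree_linear_le
      have h0 : (pbPoly p s).coeff (k+1) = 0 := coeff_eq_zero_of_natDegree_lt (by omega)
      rw [h0]
      rcases hf.lt_or_eq with h | h
      · exact Or.inl h
      · exact Or.inr ⟨h.symm, rfl⟩


/-- the operator `u (1+u) d/du`. -/
noncomputable def uD (p : ℝ[X]) : ℝ[X] := X * (1 + X) * derivative p

lemma uD_mul (p q : ℝ[X]) : uD (p * q) = uD p * q + p * uD q := by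
  unfold uD; rw [derivative_mul]; ring

lemma uD_add (p q : ℝ[X]) : uD (p + q) = uD p + uD q := by
  unfold uD; rw [derivative_add]; ring

lemma uD_sum {ι : Type*} (s : Finset ι) (f : ι → ℝ[X]) : uD (∑ i ∈ s, f i) = ∑ i ∈ s, uD (f i) := by
  unfold uD; rw [derivative_sum, Finset.mul_sum]

lemma uD_smul (c : ℝ) (p : ℝ[X]) : uD (C c * p) = C c * uD p := by
  unfold uD; rw [derivative_C_mul]; ring

/-- coefficientwise application of `uD`. -/
noncomputable def psD (F : PowerSeries ℝ[X]) : PowerSeries ℝ[X] :=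
  PowerSeries.mk fun n => uD (PowerSeries.coeff n F)

lemma psD_mul (F G : PowerSeries ℝ[X]) : psD (F * G) = psD F * G + F * psD G := by
  ext1 n
  simp only [psD, PowerSeries.coeff_mk, PowerSeries.coeff_mul, map_add, uD_sum, uD_mul,
    Finset.sum_add_distrib]

lemma psD_pow (F : PowerSeries ℝ[X]) (r : ℕ) :
    psD (F ^ (r+1)) = (r+1 : ℕ) * F ^ r * psD F := by
  induction r with
  | zero => simp
  | succ r ih => rw [pow_succ, psD_mul, ih]; push_cast; ring

/-- the solution of a Burgers type recursion. -/
lemma burgers (q : ℕ → ℝ[X]) (h0 : q 0 = 1 + X)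
    (hq : ∀ n, q (n+1) = ∑ k ∈ range (n+1), (n.choose k : ℝ[X]) * (q (n-k) * uD (q k))) (n : ℕ) :
    C ((n:ℝ)+1) * q n = uD^[n] ((1 + X)^(n+1)) := by
  let F : PowerSeries ℝ[X] := PowerSeries.mk fun n => C ((n.factorial : ℝ)⁻¹) * q n
  have hF : PowerSeries.derivative ℝ[X] F = F * psD F := by
    ext1 n
    rw [PowerSeries.coeff_derivative, mul_comm F, PowerSeries.coeff_mul,
      Finset.Nat.sum_antidiagonal_eq_sum_range_succ_mk]
    simp only [F, psD, PowerSeries.coeff_mk, hq n, uD_smul]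
    rw [Finset.mul_sum, Finset.sum_mul]
    refine Finset.sum_congr rfl fun k hk => ?_
    have hk : k ≤ n := by simpa [Nat.lt_succ_iff] using hk
    have e : C (((n+1).factorial : ℝ)⁻¹) * (n.choose k : ℝ[X]) * ((n:ℝ[X]) + 1)
        = C ((k.factorial : ℝ)⁻¹) * C (((n-k).factorial : ℝ)⁻¹) := by
      have e1 : (n.choose k : ℝ[X]) = C (n.choose k : ℝ) := by simp
      have e2 : ((n:ℝ[X]) + 1) = C ((n:ℝ)+1) := by simp
      rw [e1, e2, ← C_mul, ← C_mul, ← C_mul]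
      congr 1
      rw [Nat.cast_choose ℝ hk, Nat.factorial_succ]
      push_cast
      have := Nat.factorial_pos n
      field_simp
    linear_combination (q (n-k) * uD (q k)) * e
  have hpow : ∀ r, PowerSeries.derivative ℝ[X] (F^(r+1)) * (r+2 : ℕ) = (r+1 : ℕ) * psD (F^(r+2)) := by
    intro r
    rw [psD_pow, PowerSeries.derivative_pow, hF]
    push_cast
    ring
  have main : ∀ n r, C (((n+r+1 : ℕ):ℝ) * n.factorial) * PowerSeries.coeff n (F^(r+1))
      = C ((r:ℝ)+1) * uD^[n] ((1+X)^(n+r+1)) := by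
    intro n
    induction n with
    | zero =>
      intro r
      have : PowerSeries.constantCoeff F = 1 + X := by
        rw [← PowerSeries.coeff_zero_eq_constantCoeff_apply]
        simp [F, h0]
      simp [this]
    | succ n ih =>
      intro r
      have h1 := congrArg (PowerSeries.coeff n) (hpow r)
      have h2 := congrArg uD (ih (r+1))
      rw [uD_smul, uD_smul, ← Function.iterate_succ_apply' uD] at h2
      have e3 : ∀ (a:ℕ) (G : PowerSeries ℝ[X]), (a : PowerSeries ℝ[X]) * G = PowerSeries.C (a : ℝ[X]) * G := by
        intro a G; simp
      rw [mul_comm, e3, e3, PowerSeries.coeff_C_mul, PowerSeries.coeff_C_mul, PowerSeries.coeff_derivative] at h1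
      simp only [psD, PowerSeries.coeff_mk] at h1
      have e4 : n + (r+1) + 1 = n + 1 + r + 1 := by ring
      rw [e4] at h2
      have hne : C ((r:ℝ) + 2) ≠ 0 := by rw [Ne, C_eq_zero]; positivity
      apply mul_left_cancel₀ hne
      simp only [C_mul, C_add, Nat.factorial_succ, Nat.cast_mul, Nat.cast_add, Nat.cast_one, map_natCast, C_1,
        map_ofNat, Nat.cast_ofNat] at h1 h2 ⊢
      linear_combination ((n:ℝ[X])+1+r+1) * (n.factorial : ℝ[X]) * h1 + ((r:ℝ[X]) + 1) * h2
  have := main n 0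
  simp only [F, zero_add, pow_one, PowerSeries.coeff_mk, add_zero, Nat.cast_zero, C_1, one_mul] at this
  rw [← this, ← mul_assoc, ← C_mul]
  congr 2
  have := Nat.factorial_pos n
  push_cast
  field_simp

/-- polynomials with all roots in `[-1,0]`, degree `d`, sum of the roots `-e`. -/
def Nice (d : ℕ) (e : ℝ) (H : ℝ[X]) : Prop :=
  H.Splits ∧ H.natDegree = d ∧ 0 < H.leadingCoeff ∧ (∀ x ∈ H.roots, -1 ≤ x ∧ x ≤ 0) ∧
    H.coeff (d-1) = e * H.leadingCoeff

lemma nice_start (n : ℕ) : Nice (n+1) (n+1) ((1+X)^(n+1)) := by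
  have hm : Monic ((1+X : ℝ[X])^(n+1)) := by
    rw [add_comm]; exact (monic_X_add_C (1:ℝ)).pow (n+1)
  refine ⟨?_, ?_, ?_, ?_, ?_⟩
  · rw [add_comm]; exact (Splits.X_add_C (1:ℝ)).pow _
  · rw [add_comm, ← C_1, natDegree_pow, natDegree_X_add_C, mul_one]
  · rw [hm.leadingCoeff]; norm_num
  · intro x hx
    have := (mem_roots'.1 hx).2
    simp [IsRoot.def] at this
    constructor <;> linarith
  · rw [hm.leadingCoeff, add_comm 1 X, coeff_X_add_one_pow]
    simp

lemma nice_step (d : ℕ) (e : ℝ) (H : ℝ[X]) (h : Nice (d+2) e H) :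
    Nice (d+3) (1 + e * (d+1) / (d+2)) (uD H) := by
  obtain ⟨hs, hd, hl, hr, hc⟩ := h
  have hH0 : H ≠ 0 := by rintro rfl; simp at hl
  have hd1 : (derivative H).natDegree = d+1 := by
    rw [natDegree_derivative, hd]; rfl
  have hD0 : derivative H ≠ 0 := by
    intro h; rw [h] at hd1; simp at hd1
  have hlD : (derivative H).leadingCoeff = (d+2) * H.leadingCoeff := by
    rw [leadingCoeff, hd1, coeff_derivative, leadingCoeff, hd]; push_cast; ring
  have hsD : (derivative H).Splits := by
    rw [splits_iff_card_roots]
    have h1 := card_roots_le_derivative H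
    rw [splits_iff_card_roots.1 hs, hd] at h1
    have h2 := card_roots' (derivative H)
    omega
  have hXm : Monic (X * (1 + X) : ℝ[X]) := by
    rw [add_comm]; exact monic_X.mul (monic_X_add_C (1:ℝ))
  have hX0 : (X * (1 + X) : ℝ[X]) ≠ 0 := hXm.ne_zero
  have hXd : (X * (1 + X) : ℝ[X]).natDegree = 2 := by
    rw [add_comm, ← C_1, natDegree_mul X_ne_zero (monic_X_add_C (1:ℝ)).ne_zero, natDegree_X,
      natDegree_X_add_C]
  have hl' : (uD H).leadingCoeff = (d+2) * H.leadingCoeff := by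
    unfold uD; rw [leadingCoeff_mul, hXm.leadingCoeff, one_mul, hlD]
  refine ⟨?_, ?_, ?_, ?_, ?_⟩
  · unfold uD
    refine Splits.mul (Splits.mul Splits.X ?_) hsD
    rw [add_comm]; exact Splits.X_add_C (1:ℝ)
  · unfold uD; rw [natDegree_mul hX0 hD0, hXd, hd1]; omega
  · rw [hl']; positivity
  · intro x hx
    have hx := (mem_roots'.1 hx).2
    unfold uD at hx
    simp only [IsRoot.def, eval_mul, eval_X, eval_add, eval_one, mul_eq_zero] at hx
    rcases hx with (hx | hx) | hx
    · constructor <;> linarith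
    · constructor <;> linarith
    · by_contra hcon
      have hne : H.eval x ≠ 0 := by
        intro h0
        exact hcon (hr x (mem_roots'.2 ⟨hH0, h0⟩))
      have hE := hs.eval_derivative_eq_eval_mul_sum hne
      rw [hx] at hE
      have hsum := (mul_eq_zero.1 hE.symm).resolve_left hne
      have hne0 : H.roots ≠ 0 := by
        apply hs.roots_ne_zero; rw [hd]; omega
      obtain ⟨y, hy⟩ := Multiset.exists_mem_of_ne_zero hne0
      rw [not_and_or, not_le, not_le] at hcon
      rcases hcon with hcon | hcon
      · have : (Multiset.map (fun z => 1 / (x - z)) H.roots).sum < (Multiset.map (fun z => (0:ℝ)) H.roots).sum := by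
          apply Multiset.sum_lt_sum
          · intro z hz
            have := hr z hz
            apply le_of_lt
            rw [one_div, inv_lt_zero]; linarith
          · refine ⟨y, hy, ?_⟩
            have := hr y hy
            rw [one_div, inv_lt_zero]; linarith
        simp at this hsum
        linarith
      · have : (Multiset.map (fun z => (0:ℝ)) H.roots).sum < (Multiset.map (fun z => 1 / (x - z)) H.roots).sum := by
          apply Multiset.sum_lt_sum
          · intro z hz
            have := hr z hz
            apply le_of_lt
            rw [one_div, inv_pos]; linarith
          · refine ⟨y, hy, ?_⟩
            have := hr y hy
            rw [one_div, inv_pos]; linarith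
        simp at this hsum
        linarith
  · rw [hl']
    have e1 : uD H = X * (derivative H + X * derivative H) := by unfold uD; ring
    have e2 : H.coeff (d+2) = H.leadingCoeff := by rw [leadingCoeff, hd]
    have e3 : H.coeff (d+1) = e * H.leadingCoeff := hc
    have : d + 3 - 1 = (d+1)+1 := rfl
    rw [this, e1, coeff_X_mul, coeff_add, coeff_X_mul, coeff_derivative, coeff_derivative, e2, e3]
    push_cast
    field_simp
    ring

lemma nice_iter (n k : ℕ) (hn : 1 ≤ n) :
    Nice (n+1+k) (((n:ℝ)*(n+1) + k*(n+1) + k*(k-1)/2)/(n+k)) (uD^[k] ((1+X)^(n+1))) := by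
  obtain ⟨n, rfl⟩ : ∃ a, n = a+1 := ⟨n-1, by omega⟩
  induction k with
  | zero =>
    have := nice_start (n+1)
    simp only [Function.iterate_zero, id]
    convert this using 1
    push_cast
    field_simp
    ring
  | succ k ih =>
    rw [Function.iterate_succ_apply']
    have e : n+1+1+k = (n+k)+2 := by ring
    rw [e] at ih
    have := nice_step _ _ _ ih
    have e' : n+1+1+(k+1) = (n+k)+3 := by ring
    rw [e']
    convert this using 1
    push_cast
    have h1 : (n:ℝ) + 1 + (k+1) ≠ 0 := by positivity
    have h2 : (n:ℝ) + 1 + k ≠ 0 := by positivity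
    have h3 : (n:ℝ) + k + 2 ≠ 0 := by positivity
    field_simp
    ring


/-- no `a b a b` pattern. -/
def NCL {α : Type*} (w : List α) : Prop := ∀ a b, List.Sublist [a,b,a,b] w → a = b

lemma NCL.sub {α : Type*} {w w' : List α} (h : NCL w) (hs : List.Sublist w' w) : NCL w' :=
  fun a b hab => h a b (hab.trans hs)

lemma NCL_insert {α : Type*} (u v x : List α) (h1 : NCL (u ++ x)) (h2 : NCL v)
    (hd : ∀ a ∈ v, a ∉ u ∧ a ∉ x) : NCL (u ++ (v ++ x)) := by
  intro a b hab
  obtain ⟨l1, l', e1, s1, s'⟩ := List.sublist_append_iff.1 hab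
  obtain ⟨l2, l3, rfl, s2, s3⟩ := List.sublist_append_iff.1 s'
  by_contra hne
  have k1 : l1 ++ l3 ≠ [a, b, a, b] := fun h => hne (h1 a b (h ▸ s1.append s3))
  have k2 : l2 ≠ [a, b, a, b] := fun h => hne (h2 a b (h ▸ s2))
  have k3 : ∀ c ∈ l2, c ∉ l1 ∧ c ∉ l3 := fun c hc =>
    ⟨fun h => (hd c (s2.subset hc)).1 (s1.subset h), fun h => (hd c (s2.subset hc)).2 (s3.subset h)⟩
  clear s1 s2 s3 s' h1 h2 hd hab
  rcases l1 with _ | ⟨c1, _ | ⟨c2, _ | ⟨c3, _ | ⟨c4, l1⟩⟩⟩⟩ <;>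
  rcases l2 with _ | ⟨d1, _ | ⟨d2, _ | ⟨d3, _ | ⟨d4, l2⟩⟩⟩⟩ <;>
  simp at e1 k1 k2 k3 <;> grind

lemma NCL_wrap {α : Type*} (M : α) (v : List α) (h : NCL v) (hM : M ∉ v) :
    NCL (M :: (v ++ [M])) := by
  intro a b hab
  by_contra hne
  by_cases ha : a = M
  · subst ha
    have h1 : List.Sublist [b, a, b] (v ++ [a]) := by simpa using hab
    obtain ⟨l1, l2, e, s1, s2⟩ := List.sublist_append_iff.1 h1
    have m1 := s1.subset
    have m2 := s2.subset
    rcases l1 with _ | ⟨c1, _ | ⟨c2, _ | ⟨c3, l1⟩⟩⟩ <;> simp at e m1 m2 <;> grind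
  · have h1 : List.Sublist [a, b, a, b] (v ++ [M]) := by
      rcases List.sublist_cons_iff.1 hab with h | ⟨r, h, _⟩
      · exact h
      · simp at h; exact absurd h.1 ha
    obtain ⟨l1, l2, e, s1, s2⟩ := List.sublist_append_iff.1 h1
    have m1 := s1.subset
    have m2 := s2.subset
    have l2len := s2.length_le
    rcases l1 with _ | ⟨c1, _ | ⟨c2, _ | ⟨c3, _ | ⟨c4, l1⟩⟩⟩⟩ <;> simp at e m1 m2
    · grind
    · grind
    · grind
    · grind
    · obtain ⟨rfl, rfl, rfl, rfl, rfl, rfl⟩ := e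
      exact hne (h _ _ s1)

/-- number of interior descents. -/
def desI {α : Type*} [LinearOrder α] : List α → ℕ
  | [] => 0
  | [_] => 0
  | a :: b :: l => (if b < a then 1 else 0) + desI (b :: l)

/-- number of descents, the last position counting as a descent. -/
def desL {α : Type*} [LinearOrder α] (w : List α) : ℕ := desI w + (if w = [] then 0 else 1)

section
variable {α : Type*} [LinearOrder α]

lemma desI_append (M : α) (u r : List α) (hu : ∀ a ∈ u, a < M) :
    desI (u ++ M :: r) = desI u + desI (M :: r) := by
  induction u with
  | nil => simp [desI]
  | cons a u ih =>
    cases u with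
    | nil =>
      have : ¬ M < a := not_lt.2 (hu a (by simp)).le
      simp [desI, this]
    | cons b u =>
      have := ih (fun c hc => hu c (List.mem_cons_of_mem _ hc))
      simp only [List.cons_append, desI] at this ⊢
      omega

lemma desI_cons (M : α) (x : List α) (hx : ∀ a ∈ x, a < M) : desI (M :: x) = desL x := by
  cases x with
  | nil => simp [desI, desL]
  | cons b x =>
    have := hx b (by simp)
    simp [desI, desL, this]; omega

lemma desL_insert (M : α) (u v x : List α) (hu : ∀ a ∈ u, a < M) (hv : ∀ a ∈ v, a < M)
    (hx : ∀ a ∈ x, a < M) :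
    desL (u ++ M :: (v ++ M :: x)) = desI u + desL x + 1 + desL v := by
  have h1 : desI (M :: (v ++ M :: x)) = desL v + desL x := by
    cases v with
    | nil => simp [desI, desI_cons M x hx, desL]
    | cons b v =>
      have hb := hv b (by simp)
      have := desI_append M (b :: v) x hv
      simp only [List.cons_append, desI, hb, if_true] at this ⊢
      rw [this, desI_cons M x hx]
      simp [desL]; omega
  have h2 : desL (u ++ M :: (v ++ M :: x)) = desI (u ++ M :: (v ++ M :: x)) + 1 := by
    simp [desL]
  rw [h2, desI_append M u _ hu, h1]; omega

lemma desI_lt (w : List α) : w ≠ [] → desI w + 1 ≤ w.length := by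
  induction w with
  | nil => simp
  | cons a w ih =>
    intro _
    cases w with
    | nil => simp [desI]
    | cons b w =>
      have := ih (by simp)
      simp only [desI, List.length_cons] at this ⊢
      split_ifs <;> omega

lemma desL_le (w : List α) : desL w ≤ w.length := by
  unfold desL
  split_ifs with h
  · subst h; simp [desI]
  · exact desI_lt w h

lemma slot_sum (y : List α) (g : ℕ → ℝ[X]) :
    ∑ i ∈ range (y.length + 1), g (desI (y.take i) + desL (y.drop i) + 1)
      = (desL y : ℝ[X]) * g (desL y) + ((y.length : ℝ[X]) + 1 - (desL y : ℝ[X])) * g (desL y + 1) := by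
  induction y generalizing g with
  | nil => simp [desI, desL]
  | cons b y ih =>
    cases y with
    | nil => simp [desI, desL, Finset.sum_range_succ]; ring
    | cons c y =>
      rw [Finset.sum_range_succ', List.length_cons, Finset.sum_range_succ']
      by_cases hcb : c < b
      · have ih := ih (fun d => g (d + 1))
        rw [Finset.sum_range_succ'] at ih
        simp only [List.take_succ_cons, List.drop_succ_cons, List.take_zero, List.drop_zero, desI, desL, hcb,
          if_true, List.length_cons, reduceCtorEq, if_false] at ih ⊢
        push_cast at ih ⊢
        have e : ∀ j, 1 + desI (c :: List.take j y) + (desI (List.drop j y) + (if List.drop j y = [] then 0 else 1)) + 1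
          = desI (c :: List.take j y) + (desI (List.drop j y) + (if List.drop j y = [] then 0 else 1)) + 1 + 1 := by
          intro j; ring
        simp only [e]
        have e2 : 1 + desI (c :: y) = desI (c :: y) + 1 := by ring
        simp only [e2, zero_add] at ih ⊢
        linear_combination ih
      · have ih := ih g
        rw [Finset.sum_range_succ'] at ih
        simp only [List.take_succ_cons, List.drop_succ_cons, List.take_zero, List.drop_zero, desI, desL, hcb,
          List.length_cons, reduceCtorEq, if_false, zero_add] at ih ⊢
        push_cast at ih ⊢
        linear_combination ih

/-- quasi-Stirling words on the alphabet `S`. -/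
noncomputable def qsL (S : Finset α) : Finset (List α) := ((S.val + S.val).lists).toFinset.filter NCL

lemma mem_qsL (S : Finset α) (w : List α) :
    w ∈ qsL S ↔ (∀ a, w.count a = if a ∈ S then 2 else 0) ∧ NCL w := by
  unfold qsL
  rw [Finset.mem_filter]
  refine and_congr_left fun _ => ?_
  rw [Multiset.mem_toFinset, Multiset.mem_lists_iff]
  rw [show (⟦w⟧ : Quotient (List.isSetoid α)) = (w : Multiset α) from rfl]
  refine Multiset.ext.trans ?_
  refine forall_congr' fun a => ?_
  simp only [Multiset.coe_count, Multiset.count_add]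
  split_ifs with h
  · rw [Multiset.count_eq_one_of_mem S.nodup h]; omega
  · rw [Multiset.count_eq_zero_of_notMem h]; omega

lemma qsL_length (S : Finset α) (w : List α) (h : w ∈ qsL S) : w.length = 2 * S.card := by
  unfold qsL at h
  rw [Finset.mem_filter, Multiset.mem_toFinset, Multiset.mem_lists_iff] at h
  have := congrArg Multiset.card h.1
  simp at this
  rw [← this]; ring

lemma qsL_mem (S : Finset α) (w : List α) (h : w ∈ qsL S) (a : α) : a ∈ w ↔ a ∈ S := by
  have h1 := ((mem_qsL S w).1 h).1 a
  rw [← List.count_pos_iff, h1]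
  split_ifs with h <;> simp [h]

end

section
variable {α : Type*} [LinearOrder α]

lemma qs_fwd (S T : Finset α) (M : α) (hMS : M ∉ S) (hT : T ⊆ S) (u x v : List α)
    (hy : u ++ x ∈ qsL T) (hv : v ∈ qsL (S \ T)) :
    u ++ M :: (v ++ M :: x) ∈ qsL (insert M S) := by
  have hy' := (mem_qsL _ _).1 hy
  have hv' := (mem_qsL _ _).1 hv
  have hMv : M ∉ v := by
    rw [qsL_mem _ _ hv]; simp [hMS]
  have hMy : M ∉ u ++ x := by
    rw [qsL_mem _ _ hy]; exact fun h => hMS (hT h)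
  rw [mem_qsL]
  constructor
  · intro a
    have h1 := hy'.1 a
    have h2 := hv'.1 a
    have hTa := @hT a
    simp only [List.count_append, List.count_cons, Finset.mem_insert, Finset.mem_sdiff] at h1 h2 ⊢
    by_cases haM : a = M
    · subst haM
      have : a ∉ T := fun h => hMS (hT h)
      simp [hMS, this] at h1 h2 ⊢
      simp [h1, h2]
    · have : ¬ M = a := fun h => haM h.symm
      by_cases haT : a ∈ T <;> by_cases haS : a ∈ S <;> simp [haM, haT, haS, this] at h1 h2 hTa ⊢ <;> omega
  · have := NCL_insert u (M :: (v ++ [M])) x hy'.2 (NCL_wrap M v hv'.2 hMv) (by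
      intro a ha
      simp only [List.mem_cons, List.mem_append, List.not_mem_nil, or_false] at ha
      have hnot : a ∉ u ++ x := by
        rcases ha with rfl | ha | rfl
        · exact hMy
        · rw [qsL_mem _ _ hv] at ha
          rw [qsL_mem _ _ hy]
          exact (Finset.mem_sdiff.1 ha).2
        · exact hMy
      simpa using hnot)
    simpa using this

lemma qs_bwd (S : Finset α) (M : α) (hMS : M ∉ S) (w : List α) (hw : w ∈ qsL (insert M S)) :
    ∃ u v x T, w = u ++ M :: (v ++ M :: x) ∧ T ⊆ S ∧ u ++ x ∈ qsL T ∧ v ∈ qsL (S \ T) := by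
  have hw' := (mem_qsL _ _).1 hw
  have hMw : M ∈ w := (qsL_mem _ _ hw M).2 (by simp)
  obtain ⟨u, r, rfl, hu⟩ := List.eq_append_cons_of_mem hMw
  have hc := hw'.1 M
  have hu0 := List.count_eq_zero.2 hu
  simp only [List.count_append, List.count_cons_self, Finset.mem_insert_self, if_true, hu0] at hc
  have hMr : M ∈ r := by rw [← List.count_pos_iff]; omega
  obtain ⟨v, x, rfl, hv⟩ := List.eq_append_cons_of_mem hMr
  have hv0 := List.count_eq_zero.2 hv
  simp only [List.count_append, List.count_cons_self, hv0] at hc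
  have hx0 : List.count M x = 0 := by omega
  have hx : M ∉ x := List.count_eq_zero.1 hx0
  have key : ∀ a ∈ v, a ∉ u ∧ a ∉ x := by
    intro a ha
    have haM : a ≠ M := fun h => hv (h ▸ ha)
    constructor
    · intro hau
      apply haM
      apply hw'.2 a M
      have h1 : List.Sublist [a] u := List.singleton_sublist.2 hau
      have h2 : List.Sublist [a] v := List.singleton_sublist.2 ha
      have h3 : List.Sublist [M] (M :: x) := by simp
      exact h1.append (List.Sublist.cons_cons M (h2.append h3))
    · intro hax
      apply haM
      symm
      apply hw'.2 M a
      have h1 : List.Sublist [a] x := List.singleton_sublist.2 hax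
      have h2 : List.Sublist [a] v := List.singleton_sublist.2 ha
      have h3 : List.Sublist [] u := by simp
      exact h3.append (List.Sublist.cons_cons M (h2.append (List.Sublist.cons_cons M h1)))
  have hcount : ∀ a, a ≠ M → List.count a u + List.count a v + List.count a x = if a ∈ S then 2 else 0 := by
    intro a ha
    have := hw'.1 a
    have ha' : ¬ M = a := fun h => ha h.symm
    simp [List.count_append, ha, ha'] at this
    rw [← this]; ring
  refine ⟨u, v, x, (u ++ x).toFinset, rfl, ?_, ?_, ?_⟩
  · intro a ha
    rw [List.mem_toFinset] at ha
    have haM : a ≠ M := by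
      rintro rfl
      rw [List.mem_append] at ha
      tauto
    have := hcount a haM
    rw [← List.count_pos_iff, List.count_append] at ha
    by_contra h
    simp [h] at this
    simp [this] at ha
  · rw [mem_qsL]
    constructor
    · intro a
      split_ifs with ha <;> rw [List.mem_toFinset] at ha
      · have haM : a ≠ M := by
          rintro rfl
          rw [List.mem_append] at ha
          tauto
        have h1 := hcount a haM
        have hav : a ∉ v := by
          intro h
          have := key a h
          rw [List.mem_append] at ha
          tauto
        rw [List.count_eq_zero.2 hav] at h1
        rw [← List.count_pos_iff] at ha
        rw [List.count_append] at ha ⊢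
        split_ifs at h1 <;> omega
      · exact List.count_eq_zero.2 ha
    · refine hw'.2.sub ?_
      refine List.Sublist.append (List.Sublist.refl u) ?_
      refine List.Sublist.cons _ ?_
      exact List.Sublist.trans (List.Sublist.cons _ (List.Sublist.refl x)) (List.sublist_append_right v _)
  · rw [mem_qsL]
    constructor
    · intro a
      by_cases hav : a ∈ v
      · have haM : a ≠ M := fun h => hv (h ▸ hav)
        have h1 := hcount a haM
        have h2 := key a hav
        rw [List.count_eq_zero.2 h2.1, List.count_eq_zero.2 h2.2] at h1
        have h3 : 0 < List.count a v := List.count_pos_iff.2 hav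
        have haS : a ∈ S := by
          by_contra h; simp [h] at h1; omega
        simp [haS] at h1
        simp [haS, h2, h1]
      · rw [List.count_eq_zero.2 hav]
        by_cases haM : a = M
        · subst haM; simp [hMS]
        · have h1 := hcount a haM
          rw [List.count_eq_zero.2 hav] at h1
          symm
          rw [if_neg]
          rw [Finset.mem_sdiff, List.mem_toFinset]
          rintro ⟨h2, h3⟩
          rw [List.mem_append, not_or, ← List.count_eq_zero, ← List.count_eq_zero] at h3
          simp [h2, h3] at h1
    · refine hw'.2.sub ?_
      refine List.Sublist.trans ?_ (List.sublist_append_right u _)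
      refine List.Sublist.cons _ ?_
      exact List.sublist_append_left v _

lemma qs_sum (S : Finset α) (M : α) (hM : ∀ a ∈ S, a < M) (g : ℕ → ℝ[X]) :
    ∑ w ∈ qsL (insert M S), g (desL w) =
      ∑ T ∈ S.powerset, ∑ y ∈ qsL T, ∑ v ∈ qsL (S \ T), ∑ i ∈ range (2 * T.card + 1),
        g (desI (y.take i) + desL (y.drop i) + 1 + desL v) := by
  have hMS : M ∉ S := fun h => lt_irrefl _ (hM M h)
  rw [Finset.sum_sigma', Finset.sum_sigma', Finset.sum_sigma']
  symm
  refine Finset.sum_bij (fun z _ => z.1.1.2.take z.2 ++ M :: (z.1.2 ++ M :: z.1.1.2.drop z.2)) ?_ ?_ ?_ ?_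
  · rintro ⟨⟨⟨T, y⟩, v⟩, i⟩ hz
    simp only [Finset.mem_sigma, Finset.mem_powerset, Finset.mem_range] at hz
    obtain ⟨⟨⟨hT, hy⟩, hv⟩, hi⟩ := hz
    exact qs_fwd S T M hMS hT _ _ _ (by rw [List.take_append_drop]; exact hy) hv
  · rintro ⟨⟨⟨T, y⟩, v⟩, i⟩ hz ⟨⟨⟨T', y'⟩, v'⟩, i'⟩ hz' heq
    simp only [Finset.mem_sigma, Finset.mem_powerset, Finset.mem_range] at hz hz' heq
    obtain ⟨⟨⟨hT, hy⟩, hv⟩, hi⟩ := hz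
    obtain ⟨⟨⟨hT', hy'⟩, hv'⟩, hi'⟩ := hz'
    have hMy : M ∉ y := by
      rw [qsL_mem _ _ hy]; exact fun h => hMS (hT h)
    have hMy' : M ∉ y' := by
      rw [qsL_mem _ _ hy']; exact fun h => hMS (hT' h)
    have hMv : M ∉ v := by
      rw [qsL_mem _ _ hv]; simp [hMS]
    have hMv' : M ∉ v' := by
      rw [qsL_mem _ _ hv']; simp [hMS]
    have t1 : M ∉ y.take i := fun h => hMy (List.mem_of_mem_take h)
    have t1' : M ∉ y'.take i' := fun h => hMy' (List.mem_of_mem_take h)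
    have t2 : M ∉ y.drop i := fun h => hMy (List.mem_of_mem_drop h)
    have t2' : M ∉ y'.drop i' := fun h => hMy' (List.mem_of_mem_drop h)
    have split : ∀ (p p' r r' : List α), M ∉ p → M ∉ p' → p ++ M :: r = p' ++ M :: r' → p = p' ∧ r = r' := by
      intro p
      induction p with
      | nil =>
        intro p' r r' _ hp' h
        cases p' with
        | nil => simpa using h
        | cons b p' => simp at h hp'; exact absurd h.1 hp'.1
      | cons b p ih =>
        intro p' r r' hp hp' h
        cases p' with
        | nil => simp at h hp; exact absurd h.1.symm hp.1
        | cons c p' =>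
          simp at h hp hp'
          have := ih p' r r' hp.2 hp'.2 h.2
          simp [h.1, this]
    obtain ⟨e1, e2⟩ := split _ _ _ _ t1 t1' heq
    obtain ⟨e3, e4⟩ := split _ _ _ _ hMv hMv' e2
    have ey : y = y' := by
      rw [← List.take_append_drop i y, ← List.take_append_drop i' y', e1, e4]
    subst ey
    subst e3
    have eT : T = T' := by
      ext a; rw [← qsL_mem _ _ hy, ← qsL_mem _ _ hy']
    subst eT
    have ei : i = i' := by
      have := congrArg List.length e1
      rw [List.length_take, List.length_take, qsL_length _ _ hy] at this
      omega
    subst ei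
    rfl
  · intro w hw
    obtain ⟨u, v, x, T, rfl, hT, hy, hv⟩ := qs_bwd S M hMS w hw
    refine ⟨⟨⟨⟨T, u ++ x⟩, v⟩, u.length⟩, ?_, ?_⟩
    · simp only [Finset.mem_sigma, Finset.mem_powerset, Finset.mem_range]
      refine ⟨⟨⟨hT, hy⟩, hv⟩, ?_⟩
      rw [← qsL_length _ _ hy, List.length_append]; omega
    · simp
  · rintro ⟨⟨⟨T, y⟩, v⟩, i⟩ hz
    simp only [Finset.mem_sigma, Finset.mem_powerset, Finset.mem_range] at hz
    obtain ⟨⟨⟨hT, hy⟩, hv⟩, hi⟩ := hz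
    have hyM : ∀ a ∈ y, a < M := fun a ha => hM a (hT ((qsL_mem _ _ hy a).1 ha))
    have hvM : ∀ a ∈ v, a < M := fun a ha => hM a (Finset.mem_sdiff.1 ((qsL_mem _ _ hv a).1 ha)).1
    rw [desL_insert M _ _ _ (fun a ha => hyM a (List.mem_of_mem_take ha)) hvM
      (fun a ha => hyM a (List.mem_of_mem_drop ha))]

/-- weight of a word of size `N` with `d` descents. -/
noncomputable def wt (N d : ℕ) : ℝ[X] := X ^ d * (1 + X) ^ (2 * N + 1 - d)

lemma uD_wt (N d : ℕ) (hd : d ≤ 2 * N) (l e n : ℕ) (he : e ≤ 2 * l) (hn : n = N + l + 1) :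
    (d : ℝ[X]) * wt n (d + e) + ((2 * N : ℕ) + 1 - (d : ℝ[X])) * wt n (d + 1 + e)
      = wt l e * uD (wt N d) := by
  subst hn
  obtain ⟨b, hb⟩ := Nat.exists_eq_add_of_le hd
  obtain ⟨f, hf⟩ := Nat.exists_eq_add_of_le he
  have h1 : 2 * N + 1 - d = b + 1 := by omega
  have h2 : 2 * l + 1 - e = f + 1 := by omega
  have h3 : 2 * (N + l + 1) + 1 - (d + e) = b + f + 3 := by omega
  have h4 : 2 * (N + l + 1) + 1 - (d + 1 + e) = b + f + 2 := by omega
  unfold wt uD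
  rw [h1, h2, h3, h4, hb]
  have hder : derivative ((X:ℝ[X]) ^ d * (1 + X) ^ (b+1)) * X
      = (d : ℝ[X]) * X ^ d * (1 + X) ^ (b+1) + X ^ (d+1) * ((b:ℝ[X]) + 1) * (1+X)^b := by
    have hd' : derivative (1 + X : ℝ[X]) = 1 := by simp
    rw [derivative_mul, derivative_X_pow, derivative_pow, hd']
    simp only [map_natCast, Nat.add_sub_cancel]
    cases d with
    | zero => simp; ring
    | succ d => simp; ring
  push_cast
  linear_combination (-(X ^ e * (1 + X) ^ (f+2) : ℝ[X])) * hder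

/-- total weight. -/
noncomputable def totW (S : Finset α) : ℝ[X] := ∑ w ∈ qsL S, wt S.card (desL w)

lemma totW_insert (S : Finset α) (M : α) (hM : ∀ a ∈ S, a < M) :
    totW (insert M S) = ∑ T ∈ S.powerset, totW (S \ T) * uD (totW T) := by
  have hMS : M ∉ S := fun h => lt_irrefl _ (hM M h)
  unfold totW
  rw [qs_sum S M hM, Finset.card_insert_of_notMem hMS]
  refine Finset.sum_congr rfl fun T hT => ?_
  rw [Finset.mem_powerset] at hT
  rw [uD_sum, Finset.sum_mul_sum, Finset.sum_comm]
  refine Finset.sum_congr rfl fun v hv => Finset.sum_congr rfl fun y hy => ?_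
  have hl := qsL_length _ _ hy
  have hs := slot_sum y (fun d => wt (S.card + 1) (d + desL v))
  have h1 := desL_le y
  have h2 := desL_le v
  rw [qsL_length _ _ hv] at h2
  rw [hl] at hs h1
  rw [hs]
  refine uD_wt _ _ h1 _ _ _ h2 ?_
  rw [Finset.card_sdiff_of_subset hT]
  have := Finset.card_le_card hT
  omega

lemma qsL_empty : qsL (∅ : Finset α) = {[]} := by
  ext w
  rw [Finset.mem_singleton]
  constructor
  · intro h
    have := qsL_length _ _ h
    simpa using this
  · rintro rfl
    rw [mem_qsL]
    simp [NCL]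

end

/-- the sequence of weight polynomials, defined by the recursion. -/
noncomputable def qR : ℕ → ℝ[X]
  | 0 => 1 + X
  | n + 1 => ∑ k : Fin (n+1), (n.choose k : ℝ[X]) * (qR (n - k) * uD (qR k))
decreasing_by all_goals omega

lemma qR_succ (n : ℕ) : qR (n+1) = ∑ k ∈ range (n+1), (n.choose k : ℝ[X]) * (qR (n-k) * uD (qR k)) := by
  rw [qR, Finset.sum_range]

lemma totW_card {α : Type*} [LinearOrder α] (n : ℕ) : ∀ (S : Finset α), S.card = n → totW S = qR n := by
  induction n using Nat.strong_induction_on with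
  | _ n ih =>
  intro S hS
  rcases n with _ | n
  · rw [Finset.card_eq_zero] at hS
    subst hS
    simp [totW, qsL_empty, desL, desI, qR, wt]
  · have hne : S.Nonempty := by rw [← Finset.card_pos]; omega
    obtain ⟨M, R, hR, hlt, hc⟩ : ∃ M R, S = insert M R ∧ (∀ a ∈ R, a < M) ∧ R.card = n := by
      refine ⟨S.max' hne, S.erase (S.max' hne), (Finset.insert_erase (S.max'_mem hne)).symm, ?_, ?_⟩
      · intro a ha; exact Finset.lt_max'_of_mem_erase_max' S hne ha
      · rw [Finset.card_erase_of_mem (S.max'_mem hne), hS]; rfl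
    rw [hR, totW_insert R M hlt, qR_succ]
    have h1 : ∀ T ∈ R.powerset, totW (R \ T) * uD (totW T) = (fun k => qR (n-k) * uD (qR k)) T.card := by
      intro T hT
      rw [Finset.mem_powerset] at hT
      have hle := Finset.card_le_card hT
      rw [ih T.card (by omega) T rfl, ih (n - T.card) (by omega) (R \ T)
        (by rw [Finset.card_sdiff_of_subset hT, hc])]
    rw [Finset.sum_congr rfl h1]
    refine (Finset.sum_powerset_apply_card (fun k => qR (n-k) * uD (qR k))).trans ?_
    rw [hc]
    simp only [nsmul_eq_mul]

lemma desL_ofFn {α : Type*} [LinearOrder α] (N : ℕ) (w : Fin N → α) : desL (List.ofFn w) = desW w := by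
  induction N with
  | zero => simp [desL, desI, desW]
  | succ N ih =>
    cases N with
    | zero =>
      unfold desW
      rw [Finset.filter_true_of_mem (fun i _ => Or.inl (by omega))]
      simp [desL, desI]
    | succ N =>
      have h := ih (fun i => w i.succ)
      unfold desW at h ⊢
      rw [Fin.card_filter_univ_succ]
      rw [List.ofFn_succ, List.ofFn_succ]
      rw [List.ofFn_succ] at h
      simp only [desL, desI, reduceCtorEq, if_false] at h ⊢
      have e : (univ.filter fun i : Fin (N+1) => (i : ℕ) + 1 = N+1 ∨ ∃ h : (i : ℕ) + 1 < N+1,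
          w (Fin.succ ⟨(i : ℕ) + 1, h⟩) < w i.succ).card
        = (univ.filter fun i : Fin (N+1) => ((i.succ : Fin (N+2)) : ℕ) + 1 = N+1+1 ∨
          ∃ h : ((i.succ : Fin (N+2)) : ℕ) + 1 < N+1+1, w ⟨((i.succ : Fin (N+2)) : ℕ) + 1, h⟩ < w i.succ).card := by
        congr 1
        ext i
        simp [Fin.succ]
      have h0 : ((((0 : Fin (N+2)) : ℕ) + 1 = N+1+1 ∨ ∃ h : ((0 : Fin (N+2)) : ℕ) + 1 < N+1+1,
          w ⟨((0 : Fin (N+2)) : ℕ) + 1, h⟩ < w 0)) ↔ w (Fin.succ 0) < w 0 := by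
        simp
      rw [e] at h
      simp only [h0]
      rw [← h]
      split_ifs <;> omega

lemma NCL_ofFn {α : Type*} {N : ℕ} (w : Fin N → α) : NCL (List.ofFn w) ↔
    ∀ i j l p : Fin N, i < j → j < l → l < p → w i = w l → w j = w p → w i = w j := by
  constructor
  · intro h i j l p hij hjl hlp h1 h2
    apply h
    have hlen : (List.ofFn w).length = N := by simp
    have := List.map_getElem_sublist (l := List.ofFn w)
      (is := [Fin.cast hlen.symm i, Fin.cast hlen.symm j, Fin.cast hlen.symm l, Fin.cast hlen.symm p])
      (by
        simp only [List.pairwise_cons, List.mem_cons, List.not_mem_nil, or_false, forall_eq_or_imp, forall_eq,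
          Fin.lt_def, Fin.val_cast] at *
        grind)
    simpa [← h1, ← h2] using this
  · intro h a b hab
    obtain ⟨is, e, hp⟩ := List.sublist_eq_map_getElem hab
    have hlen : (List.ofFn w).length = N := by simp
    rcases is with _ | ⟨i, _ | ⟨j, _ | ⟨l, _ | ⟨p, _ | ⟨q, is⟩⟩⟩⟩⟩ <;> simp at e
    obtain ⟨e1, e2, e3, e4⟩ := e
    simp only [List.pairwise_cons, List.mem_cons, List.not_mem_nil, or_false, forall_eq_or_imp, forall_eq] at hp
    have := h (Fin.cast hlen i) (Fin.cast hlen j) (Fin.cast hlen l) (Fin.cast hlen p)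
      hp.1.1 hp.2.1.1 hp.2.2.1 (by rw [Fin.cast, Fin.cast, ← e1, ← e3]) (by rw [Fin.cast, Fin.cast, ← e2, ← e4])
    rw [Fin.cast, Fin.cast, ← e1, ← e2] at this
    exact this

lemma exists_ofFn {α : Type*} (N : ℕ) (l : List α) (h : l.length = N) :
    ∃ w : Fin N → α, List.ofFn w = l := by
  subst h
  exact ⟨l.get, List.ofFn_get l⟩

lemma mem_qs_ofFn (n : ℕ) (w : Fin (2 * n) → Fin n) :
    w ∈ quasiStirlingSet n ↔ List.ofFn w ∈ qsL (univ : Finset (Fin n)) := by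
  rw [mem_qsL, NCL_ofFn, quasiStirlingSet, Finset.mem_filter]
  simp only [Finset.mem_univ, true_and, if_true]
  refine and_congr_left fun _ => forall_congr' fun a => ?_
  rw [← Multiset.coe_count, ← Fin.univ_val_map, Multiset.count_map, Finset.card_def, Finset.filter_val]
  simp only [eq_comm]

lemma sum_qs (n : ℕ) (g : ℕ → ℝ[X]) :
    ∑ w ∈ quasiStirlingSet n, g (desW w) = ∑ l ∈ qsL (univ : Finset (Fin n)), g (desL l) := by
  refine Finset.sum_bij (fun w _ => List.ofFn w) ?_ ?_ ?_ ?_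
  · intro w hw; exact (mem_qs_ofFn n w).1 hw
  · intro w _ w' _ h; exact List.ofFn_injective h
  · intro l hl
    obtain ⟨w, rfl⟩ := exists_ofFn (2 * n) l (by rw [qsL_length _ _ hl]; simp)
    exact ⟨w, (mem_qs_ofFn n w).2 hl, rfl⟩
  · intro w _; rw [desL_ofFn]

lemma sum_qs_wt (n : ℕ) : ∑ w ∈ quasiStirlingSet n, wt n (desW w) = qR n := by
  rw [sum_qs n (wt n), ← totW_card n (univ : Finset (Fin n)) (by simp)]
  simp [totW]

lemma desW_le {n : ℕ} (w : Fin (2*n) → Fin n) : desW w ≤ 2 * n := by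
  have := desL_le (List.ofFn w)
  rw [desL_ofFn] at this
  simpa using this

/-- descent polynomial. -/
noncomputable def desP (n : ℕ) : ℝ[X] := ∑ w ∈ quasiStirlingSet n, X ^ (desW w)

lemma desP_coeff (n j : ℕ) :
    (desP n).coeff j = (((quasiStirlingSet n).filter fun w => desW w = j).card : ℝ) := by
  unfold desP
  rw [finsetSum_coeff]
  simp only [coeff_X_pow]
  rw [Finset.sum_boole]
  simp only [eq_comm]

lemma desP_eq (n : ℕ) (hn : 1 ≤ n) : ∃ (c : ℝ) (p : Fin (2*n+1) → ℝ), 0 < c ∧ (∀ i, 0 ≤ p i) ∧ (∀ i, p i ≤ 1) ∧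
    ∑ i, p i = (3 * (n:ℝ) + 1) / 4 ∧ desP n = C c * pbPoly p univ := by
  have hb := burgers qR (by rw [qR]) qR_succ n
  have hnice := nice_iter n n hn
  set H := uD^[n] ((1 + X : ℝ[X])^(n+1)) with hH
  obtain ⟨hs, hd, hl, hr, hc⟩ := hnice
  have hcard : H.roots.toList.length = 2*n+1 := by
    rw [Multiset.length_toList, splits_iff_card_roots.1 hs, hd]; ring
  obtain ⟨x, hx⟩ := exists_ofFn _ _ hcard
  have hroots : (univ : Finset (Fin (2*n+1))).val.map x = H.roots := by
    rw [Fin.univ_val_map, hx, Multiset.coe_toList]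
  have hxr : ∀ i, -1 ≤ x i ∧ x i ≤ 0 := by
    intro i
    apply hr
    rw [← hroots]
    exact Multiset.mem_map_of_mem _ (Finset.mem_univ i)
  have hn0 : (0:ℝ) < n := by exact_mod_cast hn
  have hn1 : (0:ℝ) < (n:ℝ) + 1 := by positivity
  refine ⟨H.leadingCoeff / (n+1), fun i => 1 + x i, by positivity, fun i => by linarith [(hxr i).1],
    fun i => by linarith [(hxr i).2], ?_, ?_⟩
  · have hv := hs.nextCoeff_eq_neg_sum_roots_mul_leadingCoeff
    rw [nextCoeff_of_natDegree_pos (by omega), hd, hc, ← hroots] at hv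
    have hsum : (Multiset.map x (univ : Finset (Fin (2*n+1))).val).sum = ∑ i, x i := rfl
    rw [hsum] at hv
    have hv2 : ∑ i, x i = - (((n:ℝ)*(n+1) + n*(n+1) + n*(n-1)/2)/(n+n)) := by
      have : H.leadingCoeff * (∑ i, x i + ((n:ℝ)*(n+1) + n*(n+1) + n*(n-1)/2)/(n+n)) = 0 := by
        linarith
      have := (mul_eq_zero.1 this).resolve_left hl.ne'
      linarith
    rw [Finset.sum_add_distrib, hv2]
    simp
    field_simp
    ring
  · apply Polynomial.eq_of_infinite_eval_eq
    refine Set.Infinite.mono (s := {(1:ℝ)}ᶜ) ?_ (Set.Finite.infinite_compl (Set.finite_singleton _))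
    intro t ht
    have ht1 : (1 - t) ≠ 0 := by
      intro h; apply ht; simp; linarith
    rw [Set.mem_ofPred_eq]
    have e1 := congrArg (eval (t / (1-t))) hb
    rw [hs.eq_prod_roots, ← hroots, ← sum_qs_wt] at e1
    simp only [eval_mul, eval_C, eval_finsetSum, wt, eval_pow, eval_X, eval_add, eval_one, Multiset.map_map] at e1
    have hprod : (Multiset.map ((fun a => X - C a) ∘ x) (univ : Finset (Fin (2*n+1))).val).prod
      = ∏ i, (X - C (x i)) := rfl
    rw [hprod, eval_prod] at e1
    simp only [eval_sub, eval_X, eval_C] at e1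
    have e2 : ∀ w ∈ quasiStirlingSet n, (t/(1-t))^(desW w) * (1 + t/(1-t))^(2*n+1-desW w)
        = t ^ (desW w) * ((1-t)^(2*n+1))⁻¹ := by
      intro w _
      have h1 := desW_le w
      have h2 : 1 + t/(1-t) = (1-t)⁻¹ := by field_simp; ring
      have h3 : (1-t)^(2*n+1) = (1-t)^(desW w) * (1-t)^(2*n+1-desW w) := by
        rw [← pow_add]; congr 1; omega
      rw [h2, h3, div_pow, inv_pow]
      field_simp
    have e3 : ∏ i : Fin (2*n+1), (t/(1-t) - x i) = (∏ i, ((1 + x i) * t + (1 - (1 + x i)))) * ((1-t)^(2*n+1))⁻¹ := by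
      have : ∀ i : Fin (2*n+1), t/(1-t) - x i = ((1 + x i) * t + (1 - (1 + x i))) * (1-t)⁻¹ := by
        intro i; field_simp; ring
      simp only [this]
      rw [Finset.prod_mul_distrib]
      simp
    rw [Finset.sum_congr rfl e2, ← Finset.sum_mul, e3] at e1
    unfold desP pbPoly
    simp only [eval_finsetSum, eval_mul, eval_C, eval_prod, eval_pow, eval_X, eval_add]
    have hne : ((1-t)^(2*n+1))⁻¹ ≠ 0 := inv_ne_zero (pow_ne_zero _ ht1)
    rw [← mul_assoc, ← mul_assoc] at e1
    have e4 := mul_right_cancel₀ hne e1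
    rw [div_mul_eq_mul_div, eq_div_iff hn1.ne', ← e4]
    ring

/-- If `m` maximizes the number of quasi-Stirling permutations of size `n ≥ 1`
with exactly `m` descents, then `|m - (3n+1)/4| < 1`. -/
theorem modal_descents_quasiStirling (n : ℕ) (hn : 1 ≤ n) (m : ℕ)
    (hm : ∀ j : ℕ, ((quasiStirlingSet n).filter fun w => desW w = j).card
        ≤ ((quasiStirlingSet n).filter fun w => desW w = m).card) :
    |(m : ℝ) - (3 * (n : ℝ) + 1) / 4| < 1 := by
  obtain ⟨c, p, hc, hp0, hp1, hsum, hP⟩ := desP_eq n hn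
  have hco : ∀ j, (((quasiStirlingSet n).filter fun w => desW w = j).card : ℝ)
      = c * (pbPoly p univ).coeff j := by
    intro j; rw [← desP_coeff, hP, coeff_C_mul]
  have hmax : ∀ j, (pbPoly p univ).coeff j ≤ (pbPoly p univ).coeff m := by
    intro j
    have h : (((quasiStirlingSet n).filter fun w => desW w = j).card : ℝ)
        ≤ (((quasiStirlingSet n).filter fun w => desW w = m).card : ℝ) := by exact_mod_cast hm j
    rw [hco, hco] at h
    exact le_of_mul_le_mul_left h hc
  have hpos : (pbPoly p univ).coeff m ≠ 0 := by
    intro h0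
    have hz : pbPoly p univ = 0 := by
      ext j
      have h1 := hmax j
      have h2 := pb_nonneg p hp0 hp1 univ j
      rw [h0] at h1
      rw [coeff_zero]
      linarith
    have h1 := congrArg (eval 1) hz
    simp [pbPoly, eval_prod] at h1
  rw [abs_lt]
  constructor
  · by_contra hcon
    rw [not_lt] at hcon
    rcases pb_low p hp0 hp1 _ univ rfl m (by rw [hsum]; linarith) with h | h
    · exact absurd (hmax (m+1)) (not_le.2 h)
    · exact hpos h.1
  · by_contra hcon
    rw [not_lt] at hcon
    have hn0 : (0:ℝ) ≤ n := by positivity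
    obtain ⟨k, rfl⟩ : ∃ k, m = k + 1 := by
      refine ⟨m - 1, ?_⟩
      have : m ≠ 0 := by
        rintro rfl
        simp at hcon
        linarith
      omega
    push_cast at hcon
    rcases pb_high p hp0 hp1 _ univ rfl k (by rw [hsum]; linarith) with h | h
    · exact absurd (hmax k) (not_le.2 h)
    · exact hpos h.2
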